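/- Let F be a maximal hke collection with α(F) = α. Then the relation ≈ on ⋃F (defined by x ≈ y iff x = y or there exist A, D ∈ F with A − D = {x} and D − A = {y}) is an equivalence relation with exactly α equivalence classes, each having exactly two elements, and F equals the collection of all subsets B of ⋃F with |B| = α that intersect every ≈-equivalence class; moreover |⋃F| = 2α. -/

import Mathlib

open Finset

/-- The union of a finite collection of finite sets. -/
def famUnion (Γ : Finset (Finset ℕ)) : Finset ℕ := Γ.sup id

/-- The intersection of a finite collection of finite sets
(equal to the usual intersection when the collection is nonempty). -/
def famInter (Γ : Finset (Finset ℕ)) : Finset ℕ :=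
  (Γ.sup id).filter (fun x => ∀ A ∈ Γ, x ∈ A)

/-- `F` is a hereditary König–Egerváry (hke) collection with `α(F) = α`:
`α` is a positive integer and `|⋃Γ| + |⋂Γ| = 2α` for every nonempty subcollection `Γ` of `F`. -/
def IsHKE (F : Finset (Finset ℕ)) (α : ℕ) : Prop :=
  0 < α ∧ ∀ Γ ⊆ F, Γ.Nonempty → (famUnion Γ).card + (famInter Γ).card = 2 * α

/-- `F` is a maximal hke collection: it is an hke collection and no collection
properly containing it is an hke collection. -/
def IsMaxHKE (F : Finset (Finset ℕ)) : Prop :=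
  (∃ α, IsHKE F α) ∧ ∀ F' : Finset (Finset ℕ), F ⊂ F' → ¬ ∃ β, IsHKE F' β

/-- The relation `≈` on `⋃F`: `x ≈ y` iff `x = y` or there are `A, D ∈ F`
with `A − D = {x}` and `D − A = {y}`. -/
def ApproxRel (F : Finset (Finset ℕ)) (x y : ℕ) : Prop :=
  x = y ∨ ∃ A ∈ F, ∃ D ∈ F, A \ D = {x} ∧ D \ A = {y}

instance (F : Finset (Finset ℕ)) (x y : ℕ) : Decidable (ApproxRel F x y) :=
  inferInstanceAs (Decidable (x = y ∨ ∃ A ∈ F, ∃ D ∈ F, A \ D = {x} ∧ D \ A = {y}))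

/-!
Fix `U ⊇ ⋃F` with `|U| = 2α`. The hke identity says that for every `Γ ⊆ F` as many points of `U`
lie in all members of `Γ` as lie in none of them. By Möbius inversion on the subsets of `F`, as many
points lie in exactly the members of `Γ` as lie in exactly the members of `F \ Γ`. Hence some
permutation of `U` sends each point to one with the complementary pattern of membership; following
it on one member of `F` and its inverse off that member gives a fixed-point-free involution `σ`
of `U` of which all members of `F` are transversals. The transversals of any such `σ` form an hke
collection, so a maximal `F` consists of all of them, and its relation `≈` has classes `{x, σ x}`.
-/

section EqualFibers

variable {ι κ P : Type*} [Fintype ι] [Fintype κ] [DecidableEq P]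

theorem card_filter_le_eq_sum_Ici [PartialOrder P] [OrderTop P] [LocallyFiniteOrder P]
    [DecidableLE P] (f : ι → P) (a : P) : #{x | a ≤ f x} = ∑ b ∈ Ici a, #{x | f x = b} := by
  rw [card_eq_sum_card_fiberwise (f := f) (t := Ici a) fun x hx => by simpa using hx]
  refine sum_congr rfl fun b hb => ?_
  rw [filter_filter]
  congr 1 with x
  have := mem_Ici.1 hb
  grind

theorem card_fiber_eq_of_card_filter_le_eq [PartialOrder P] [OrderTop P] [LocallyFiniteOrder P]
    [DecidableLE P] {f : ι → P} {g : κ → P} (h : ∀ a, #{x | a ≤ f x} = #{x | a ≤ g x}) (a : P) :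
    #{x | f x = a} = #{x | g x = a} := by
  have hf := IncidenceAlgebra.moebius_inversion_top (𝕜 := ℤ) (fun b => (#{x | f x = b} : ℤ))
    (fun b => #{x | b ≤ f x}) (fun b => mod_cast card_filter_le_eq_sum_Ici f b) a
  have hg := IncidenceAlgebra.moebius_inversion_top (𝕜 := ℤ) (fun b => (#{x | g x = b} : ℤ))
    (fun b => #{x | b ≤ g x}) (fun b => mod_cast card_filter_le_eq_sum_Ici g b) a
  simp only [h] at hf
  exact_mod_cast hf.trans hg.symm

theorem exists_equiv_comp_eq_of_card_fiber_eq {f : ι → P} {g : κ → P}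
    (h : ∀ a, #{x | f x = a} = #{x | g x = a}) : ∃ e : ι ≃ κ, ∀ x, g (e x) = f x := by
  have fiberEquiv (a : P) : {x // f x = a} ≃ {x // g x = a} :=
    Fintype.equivOfCardEq (by rw [Fintype.card_subtype, Fintype.card_subtype, h])
  exact ⟨Equiv.ofFiberEquiv fiberEquiv, Equiv.ofFiberEquiv_map fiberEquiv⟩

end EqualFibers

theorem exists_involutive_perm_of_apply_iff_not {ι : Type*} (π : Equiv.Perm ι) (p : ι → Prop)
    (hp : ∀ x, p (π x) ↔ ¬p x) :
    ∃ σ : Equiv.Perm ι, Function.Involutive σ ∧ ∀ x, σ x = π x ∨ σ x = π.symm x := by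
  classical
  let σ : ι → ι := fun x => if p x then π x else π.symm x
  have hσ : Function.Involutive σ := fun x => by
    have hsymm : p x ↔ ¬p (π.symm x) := by simpa using hp (π.symm x)
    by_cases h : p x <;> simp_all [σ]
  exact ⟨hσ.toPerm, hσ, fun x => ite_eq_or_eq (p x) (π x) (π.symm x)⟩

/-- The involution `σ` matches the elements of `U` in pairs `{x, σ x}`. It is an involution of the
whole type, whose values off `U` are immaterial. -/
structure IsPairing {ι : Type*} (σ : ι → ι) (U : Finset ι) : Prop where
  involutive : Function.Involutive σ
  apply_mem : ∀ x ∈ U, σ x ∈ U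
  apply_ne : ∀ x ∈ U, σ x ≠ x

/-- The subsets of `U` containing exactly one of `x` and `σ x` for each `x ∈ U`; when `σ` pairs up
`U`, these are the transversals of the pairs. -/
def transversals {ι : Type*} [DecidableEq ι] (σ : ι → ι) (U : Finset ι) : Finset (Finset ι) :=
  {B ∈ U.powerset | ∀ x ∈ U, x ∈ B ↔ σ x ∉ B}

theorem mem_transversals {ι : Type*} [DecidableEq ι] {σ : ι → ι} {U B : Finset ι} :
    B ∈ transversals σ U ↔ B ⊆ U ∧ ∀ x ∈ U, x ∈ B ↔ σ x ∉ B := by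
  rw [transversals, mem_filter, mem_powerset]

theorem pair_apply_eq_pair_apply_iff {ι : Type*} [DecidableEq ι] {σ : ι → ι} {x y : ι}
    (hσ : Function.Involutive σ) : ({x, σ x} : Finset ι) = {y, σ y} ↔ x = y ∨ x = σ y := by
  constructor
  · intro h
    have hx : x ∈ ({y, σ y} : Finset ι) := h ▸ mem_insert_self x {σ x}
    simpa using hx
  · rintro (rfl | rfl)
    · rfl
    · rw [hσ y, pair_comm]

namespace IsPairing

section DecidableEq

variable {ι : Type*} [DecidableEq ι] {σ : ι → ι} {U A B : Finset ι} {x : ι}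

theorem sdiff_mem_transversals (hσ : IsPairing σ U) (hA : A ∈ transversals σ U) :
    U \ A ∈ transversals σ U := by
  refine mem_transversals.2 ⟨sdiff_subset, fun x hx => ?_⟩
  have := (mem_transversals.1 hA).2 x hx
  have := hσ.apply_mem x hx
  grind

theorem insert_erase_mem_transversals (hσ : IsPairing σ U) (hA : A ∈ transversals σ U)
    (hx : x ∈ A) : insert (σ x) (A.erase x) ∈ transversals σ U := by
  obtain ⟨hAU, hA⟩ := mem_transversals.1 hA
  refine mem_transversals.2
    ⟨insert_subset (hσ.apply_mem x (hAU hx)) ((erase_subset x A).trans hAU), fun z hz => ?_⟩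
  have hzA := hA z hz
  have hne := hσ.apply_ne x (hAU hx)
  have hinj : σ z = σ x ↔ z = x := hσ.involutive.injective.eq_iff
  have hswap : σ z = x ↔ z = σ x := by rw [hσ.involutive.eq_iff, eq_comm]
  grind

theorem mem_transversals_iff_image_sdiff (hσ : IsPairing σ U) :
    B ∈ transversals σ U ↔ B ⊆ U ∧ (U \ B).image σ = B := by
  have hmem (x : ι) : x ∈ (U \ B).image σ ↔ x ∈ U ∧ σ x ∉ B := by
    rw [mem_image]
    constructor
    · rintro ⟨y, hy, rfl⟩
      rw [mem_sdiff] at hy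
      exact ⟨hσ.apply_mem y hy.1, (hσ.involutive y).symm ▸ hy.2⟩
    · rintro ⟨hx, hσx⟩
      exact ⟨σ x, mem_sdiff.2 ⟨hσ.apply_mem x hx, hσx⟩, hσ.involutive x⟩
  rw [mem_transversals, Finset.ext_iff]
  simp only [hmem]
  grind

theorem mem_transversals_iff_card (hσ : IsPairing σ U) :
    B ∈ transversals σ U ↔ B ⊆ U ∧ 2 * #B = #U ∧ ∀ x ∈ U, x ∈ B ∨ σ x ∈ B := by
  rw [hσ.mem_transversals_iff_image_sdiff]
  refine and_congr_right fun hBU => ?_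
  have hcard : #(U \ B) + #B = #U := card_sdiff_add_card_eq_card hBU
  have hcard_image : #((U \ B).image σ) = #(U \ B) :=
    card_image_of_injective _ hσ.involutive.injective
  have hsubset : (U \ B).image σ ⊆ B ↔ ∀ x ∈ U, x ∈ B ∨ σ x ∈ B := by
    rw [image_subset_iff]
    grind
  constructor
  · intro himage
    exact ⟨by rw [himage] at hcard_image; lia, hsubset.1 himage.subset⟩
  · rintro ⟨hBcard, hmeets⟩
    exact eq_of_subset_of_card_le (hsubset.2 hmeets) (by lia)

theorem two_mul_card_image_pair (hσ : IsPairing σ U) :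
    2 * #(U.image fun x => ({x, σ x} : Finset ι)) = #U := by
  rw [card_eq_sum_card_image (fun x => ({x, σ x} : Finset ι)) U, mul_comm]
  refine (sum_const_nat fun S hS => ?_).symm
  obtain ⟨y, hy, rfl⟩ := mem_image.1 hS
  have hfiber : {x ∈ U | ({x, σ x} : Finset ι) = {y, σ y}} = {y, σ y} := by
    ext x
    have := hσ.apply_mem y hy
    rw [mem_filter, pair_apply_eq_pair_apply_iff hσ.involutive]
    grind
  rw [hfiber, card_pair (hσ.apply_ne y hy).symm]

end DecidableEq

theorem exists_mem_transversals {ι : Type*} [LinearOrder ι] {σ : ι → ι} {U : Finset ι} {x : ι}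
    (hσ : IsPairing σ U) (hx : x ∈ U) : ∃ A ∈ transversals σ U, x ∈ A := by
  let smaller : Finset ι := {y ∈ U | y < σ y}
  have hsmaller : smaller ∈ transversals σ U := by
    refine mem_transversals.2 ⟨filter_subset _ _, fun y hy => ?_⟩
    have hne := hσ.apply_ne y hy
    simp only [smaller, mem_filter, hy, hσ.apply_mem y hy, hσ.involutive y, true_and, not_lt]
    exact hne.symm.le_iff_lt.symm
  by_cases hxs : x ∈ smaller
  · exact ⟨smaller, hsmaller, hxs⟩
  · exact ⟨U \ smaller, hσ.sdiff_mem_transversals hsmaller, mem_sdiff.2 ⟨hx, hxs⟩⟩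

end IsPairing

section Balanced

variable {ι : Type*} [DecidableEq ι] {F : Finset (Finset ι)} {U : Finset ι} {σ : ι → ι}

/-- Every subcollection of `F` has as many points of `U` in all of its members as in none of them.
If `U` contains `⋃F` and has `2α` elements, this is the hke condition on `F`. -/
def IsBalanced (F : Finset (Finset ι)) (U : Finset ι) : Prop :=
  ∀ Γ ⊆ F, #{x ∈ U | ∀ A ∈ Γ, x ∈ A} = #{x ∈ U | ∀ A ∈ Γ, x ∉ A}

theorem IsBalanced.exists_perm (h : IsBalanced F U) :
    ∃ π : Equiv.Perm U, ∀ x, ∀ A ∈ F, (π x : ι) ∈ A ↔ (x : ι) ∉ A := by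
  let pattern (x : U) : Finset F := {A | (x : ι) ∈ (A : Finset ι)}
  have hcard (Γ : Finset F) :
      #{x : U | Γ ≤ (pattern x)ᶜ} = #{x : U | Γ ≤ pattern x} := by
    have hΓ := h (Γ.map (.subtype _)) (map_subtype_subset Γ)
    have hcount (p : ι → Prop) [DecidablePred p] : #{x : U | p x} = #{x ∈ U | p x} := by
      rw [univ_eq_attach, filter_attach, card_map, card_attach]
    rw [← hcount, ← hcount] at hΓ
    convert hΓ.symm using 4 with x <;> simp [pattern, subset_iff]
  obtain ⟨π, hπ⟩ :=
    exists_equiv_comp_eq_of_card_fiber_eq (card_fiber_eq_of_card_filter_le_eq hcard)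
  refine ⟨π, fun x A hA => ?_⟩
  have hmem := Finset.ext_iff.1 (hπ x) ⟨A, hA⟩
  simpa [pattern] using hmem

theorem IsBalanced.exists_isPairing (h : IsBalanced F U) (hU : ∀ A ∈ F, A ⊆ U)
    (hF : F.Nonempty) : ∃ σ, IsPairing σ U ∧ F ⊆ transversals σ U := by
  obtain ⟨A₀, hA₀⟩ := hF
  obtain ⟨π, hπ⟩ := h.exists_perm
  obtain ⟨σ, hσ, hσπ⟩ :=
    exists_involutive_perm_of_apply_iff_not π (fun x => (x : ι) ∈ A₀) fun x => hπ x A₀ hA₀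
  have hσ_mem (x : U) (A : Finset ι) (hA : A ∈ F) : (x : ι) ∈ A ↔ (σ x : ι) ∉ A := by
    rcases hσπ x with hx | hx <;> rw [hx]
    · rw [hπ x A hA, not_not]
    · simpa using hπ (π.symm x) A hA
  have hext (x : ι) (hx : x ∈ U) : σ.ofSubtype x = σ ⟨x, hx⟩ :=
    Equiv.Perm.ofSubtype_apply_of_mem σ hx
  have hsq : σ.ofSubtype * σ.ofSubtype = 1 := by
    rw [← map_mul, show σ * σ = 1 from Equiv.ext hσ, map_one]
  refine ⟨σ.ofSubtype, ⟨Equiv.ext_iff.1 hsq, fun x hx => ?_, fun x hx heq => ?_⟩,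
    fun A hA => mem_transversals.2 ⟨hU A hA, fun x hx => ?_⟩⟩
  · exact (Equiv.Perm.ofSubtype_apply_mem_iff_mem σ x).2 hx
  · have := hσ_mem ⟨x, hx⟩ A₀ hA₀
    rw [← hext x hx, heq] at this
    exact iff_not_self this
  · rw [hext x hx]
    exact hσ_mem ⟨x, hx⟩ A hA

theorem IsPairing.isBalanced_transversals (hσ : IsPairing σ U) :
    IsBalanced (transversals σ U) U := by
  intro Γ hΓ
  have hmem (x : ι) (hx : x ∈ U) (A : Finset ι) (hA : A ∈ Γ) : x ∈ A ↔ σ x ∉ A :=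
    (mem_transversals.1 (hΓ hA)).2 x hx
  refine card_nbij' σ σ ?_ ?_ (fun x _ => hσ.involutive x) (fun x _ => hσ.involutive x)
  all_goals
    intro x hx
    simp only [coe_filter, Set.mem_ofPred_eq] at hx ⊢
    have := hσ.apply_mem x hx.1
    grind

end Balanced

section Families

variable {F Γ : Finset (Finset ℕ)} {U : Finset ℕ} {α x : ℕ}

theorem mem_famUnion : x ∈ famUnion Γ ↔ ∃ A ∈ Γ, x ∈ A :=
  mem_sup

theorem mem_famInter (hΓ : Γ.Nonempty) : x ∈ famInter Γ ↔ ∀ A ∈ Γ, x ∈ A := by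
  obtain ⟨A, hA⟩ := hΓ
  rw [famInter, mem_filter, mem_sup]
  exact and_iff_right_of_imp fun h => ⟨A, hA, h A hA⟩

theorem famUnion_subset_iff : famUnion Γ ⊆ U ↔ ∀ A ∈ Γ, A ⊆ U :=
  Finset.sup_le_iff

theorem famInter_subset_famUnion : famInter Γ ⊆ famUnion Γ :=
  filter_subset _ _

theorem card_famUnion_add_card_famInter_eq_iff (hU : ∀ A ∈ Γ, A ⊆ U) (hΓ : Γ.Nonempty) :
    #(famUnion Γ) + #(famInter Γ) = #U ↔
      #{x ∈ U | ∀ A ∈ Γ, x ∈ A} = #{x ∈ U | ∀ A ∈ Γ, x ∉ A} := by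
  have hUnion : famUnion Γ ⊆ U := famUnion_subset_iff.2 hU
  have hall : {x ∈ U | ∀ A ∈ Γ, x ∈ A} = famInter Γ := by
    ext x
    have := @famInter_subset_famUnion Γ x
    rw [mem_filter, ← mem_famInter hΓ]
    grind
  have hnone : {x ∈ U | ∀ A ∈ Γ, x ∉ A} = U \ famUnion Γ := by
    ext x
    rw [mem_filter, mem_sdiff, mem_famUnion]
    grind
  have := card_sdiff_add_card_eq_card hUnion
  rw [hall, hnone]
  lia

theorem isHKE_iff_isBalanced (hα : 0 < α) (hU : ∀ A ∈ F, A ⊆ U) (hcard : #U = 2 * α) :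
    IsHKE F α ↔ IsBalanced F U := by
  rw [IsHKE, and_iff_right hα, ← hcard]
  refine forall₂_congr fun Γ hΓ => ?_
  rcases Γ.eq_empty_or_nonempty with rfl | hne
  · simp
  · rw [forall_prop_of_true hne,
      card_famUnion_add_card_famInter_eq_iff (fun A hA => hU A (hΓ hA)) hne]

theorem IsMaxHKE.nonempty (hF : IsMaxHKE F) : F.Nonempty := by
  rw [nonempty_iff_ne_empty]
  rintro rfl
  refine hF.2 {{0}} (by simp) ⟨1, one_pos, fun Γ hΓ hne => ?_⟩
  obtain rfl : Γ = {{0}} := hne.subset_singleton_iff.1 hΓ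
  rfl

theorem IsMaxHKE.exists_eq_transversals (hmax : IsMaxHKE F) (hF : IsHKE F α) :
    ∃ U σ, IsPairing σ U ∧ #U = 2 * α ∧ F = transversals σ U := by
  have hle : #(famUnion F) ≤ 2 * α :=
    le_of_add_le_left (hF.2 F Subset.rfl hmax.nonempty).le
  obtain ⟨U, hFU, hcard⟩ := Infinite.exists_superset_card_eq (famUnion F) (2 * α) hle
  have hU : ∀ A ∈ F, A ⊆ U := famUnion_subset_iff.1 hFU
  have hbalanced : IsBalanced F U := (isHKE_iff_isBalanced hF.1 hU hcard).1 hF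
  obtain ⟨σ, hσ, hFσ⟩ := hbalanced.exists_isPairing hU hmax.nonempty
  have hT : IsHKE (transversals σ U) α :=
    (isHKE_iff_isBalanced hF.1 (fun _ hA => (mem_transversals.1 hA).1) hcard).2
      hσ.isBalanced_transversals
  exact ⟨U, σ, hσ, hcard, hFσ.eq_of_not_ssubset fun hss => hmax.2 _ hss ⟨α, hT⟩⟩

end Families

namespace IsPairing

variable {σ : ℕ → ℕ} {U : Finset ℕ} {α x y : ℕ}

theorem famUnion_transversals (hσ : IsPairing σ U) : famUnion (transversals σ U) = U :=
  Subset.antisymm (famUnion_subset_iff.2 fun _ hA => (mem_transversals.1 hA).1)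
    fun _ hx => mem_famUnion.2 (hσ.exists_mem_transversals hx)

theorem approxRel_transversals_iff (hσ : IsPairing σ U) (hx : x ∈ U) :
    ApproxRel (transversals σ U) x y ↔ y = x ∨ y = σ x := by
  rw [ApproxRel, eq_comm]
  refine or_congr_right ⟨?_, ?_⟩
  · rintro ⟨A, hA, D, hD, hAD, hDA⟩
    have hxAD : x ∈ A \ D := hAD ▸ mem_singleton_self x
    have hσxDA : σ x ∈ D \ A := by
      have := (mem_transversals.1 hA).2 x hx
      have := (mem_transversals.1 hD).2 x hx
      grind
    rw [hDA, mem_singleton] at hσxDA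
    exact hσxDA.symm
  · rintro rfl
    obtain ⟨A, hA, hxA⟩ := hσ.exists_mem_transversals hx
    have hne := hσ.apply_ne x hx
    have hσxA : σ x ∉ A := ((mem_transversals.1 hA).2 x hx).1 hxA
    exact ⟨A, hA, _, hσ.insert_erase_mem_transversals hA hxA, by grind, by grind⟩

theorem filter_approxRel_eq_pair (hσ : IsPairing σ U) (hx : x ∈ U) :
    {y ∈ U | ApproxRel (transversals σ U) x y} = {x, σ x} := by
  ext y
  have := hσ.apply_mem x hx
  rw [mem_filter, hσ.approxRel_transversals_iff hx]
  grind

theorem approxRel_iff_pair_eq_pair (hσ : IsPairing σ U) (hx : x ∈ U) :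
    ApproxRel (transversals σ U) x y ↔ ({x, σ x} : Finset ℕ) = {y, σ y} := by
  rw [hσ.approxRel_transversals_iff hx, eq_comm (a := ({x, σ x} : Finset ℕ)),
    pair_apply_eq_pair_apply_iff hσ.involutive]

theorem transversals_eq_filter_approxRel (hσ : IsPairing σ U) (hcard : #U = 2 * α) :
    transversals σ U =
      {B ∈ U.powerset | #B = α ∧ ∀ x ∈ U, ∃ y ∈ B, ApproxRel (transversals σ U) x y} := by
  ext B
  have hmeets : (∀ x ∈ U, ∃ y ∈ B, ApproxRel (transversals σ U) x y) ↔
      ∀ x ∈ U, x ∈ B ∨ σ x ∈ B :=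
    forall₂_congr fun x hx => by
      simp only [hσ.approxRel_transversals_iff hx, and_or_left, exists_or, exists_eq_right]
  rw [mem_filter, mem_powerset, hmeets, hσ.mem_transversals_iff_card, hcard,
    Nat.mul_right_inj two_ne_zero]

end IsPairing

/-- for a maximal hke collection `F` with `α(F) = α`, the relation `≈` on
`⋃F` is an equivalence relation (it is reflexive by definition) with exactly `α`
equivalence classes, each of exactly two elements; `F` is exactly the collection of
subsets `B` of `⋃F` with `|B| = α` meeting every `≈`-class; and `|⋃F| = 2α`. -/
theorem approxRel_equivalence_of_isMaxHKE (F : Finset (Finset ℕ)) (α : ℕ)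
    (hF : IsHKE F α) (hmax : IsMaxHKE F) :
    (∀ x ∈ famUnion F, ∀ y ∈ famUnion F, ApproxRel F x y → ApproxRel F y x) ∧
    (∀ x ∈ famUnion F, ∀ y ∈ famUnion F, ∀ z ∈ famUnion F,
      ApproxRel F x y → ApproxRel F y z → ApproxRel F x z) ∧
    ((famUnion F).image
      (fun x => (famUnion F).filter (fun y => ApproxRel F x y))).card = α ∧
    (∀ x ∈ famUnion F, ((famUnion F).filter (fun y => ApproxRel F x y)).card = 2) ∧
    F = (famUnion F).powerset.filter
      (fun B => B.card = α ∧ ∀ x ∈ famUnion F, ∃ y ∈ B, ApproxRel F x y) ∧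
    (famUnion F).card = 2 * α := by
  obtain ⟨U, σ, hσ, hcard, rfl⟩ := hmax.exists_eq_transversals hF
  rw [hσ.famUnion_transversals]
  refine ⟨fun x hx y hy hxy => ?_, fun x hx y hy z _ hxy hyz => ?_, ?_, fun x hx => ?_,
    hσ.transversals_eq_filter_approxRel hcard, hcard⟩
  · rw [hσ.approxRel_iff_pair_eq_pair hx] at hxy
    exact (hσ.approxRel_iff_pair_eq_pair hy).2 hxy.symm
  · rw [hσ.approxRel_iff_pair_eq_pair hx] at hxy ⊢
    rw [hσ.approxRel_iff_pair_eq_pair hy] at hyz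
    exact hxy.trans hyz
  · rw [image_congr fun x hx => hσ.filter_approxRel_eq_pair hx]
    have := hσ.two_mul_card_image_pair
    lia
  · rw [hσ.filter_approxRel_eq_pair hx, card_pair (hσ.apply_ne x hx).symm]
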